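/- Let R be a commutative Noetherian ring and M a nonzero finite R-module. Then grade(M) := min{i : Ext^i_R(M,R) ≠ 0} equals min{depth(R_𝔭) : 𝔭 ∈ Supp(M)}. -/

import Mathlib

open CategoryTheory

noncomputable def extGroup (R : Type) [CommRing R] (i : ℕ) (M N : Type)
    [AddCommGroup M] [Module R M] [AddCommGroup N] [Module R N] : Type :=
  ((Ext R (ModuleCat R) i).obj (Opposite.op (ModuleCat.of R M))).obj (ModuleCat.of R N)

noncomputable instance (R : Type) [CommRing R] (i : ℕ) (M N : Type)
    [AddCommGroup M] [Module R M] [AddCommGroup N] [Module R N] :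
    AddCommGroup (extGroup R i M N) := by unfold extGroup; infer_instance

noncomputable instance (R : Type) [CommRing R] (i : ℕ) (M N : Type)
    [AddCommGroup M] [Module R M] [AddCommGroup N] [Module R N] :
    Module R (extGroup R i M N) := by unfold extGroup; infer_instance

/-- The depth of a Noetherian local ring `A`, i.e. `grade(𝔪, A)`:
the least `i` with `Ext^i_A(A/𝔪, A) ≠ 0`. -/
noncomputable def depthOf (A : Type) [CommRing A] [IsLocalRing A] : ℕ :=
  sInf {i | Nontrivial (extGroup A i (IsLocalRing.ResidueField A) A)}

/-!
If some `x ∈ Ann M` is regular on `N`, then `x` acts as zero on each `Ext^i(M, N)`, so the long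
exact sequence of `0 → N → N → N/xN → 0` shows that passing from `N` to `N/xN` lowers `grade(M, N)`
by exactly one. For the same reason it lowers `depth N_𝔭` by exactly one at each `𝔭 ∈ Supp M`. If
there is no such `x`, then `Hom(M, N) ≠ 0`, so the grade is zero; the image of a nonzero map has an
associated prime `𝔭`, which lies in `Supp M`, and `depth N_𝔭 = 0`. Hence `n ≤ grade(M, N)` if and
only if `n ≤ depth N_𝔭` for all `𝔭 ∈ Supp M`, by induction on `n`.

Depths of Noetherian local rings are bounded by the Krull dimension, hence finite; so the infima may
be taken in `ℕ` instead of `ℕ∞`, where `inf ∅` is `0` instead of `⊤`.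
-/

open Abelian IsLocalRing

universe w v u

section ExtComparison

variable {C : Type u} [Category.{v} C] [Abelian C] {X Y : C}

lemma subsingleton_hom_X₃_iff {S : ShortComplex C} (hS : S.Exact) [Epi S.g] :
    Subsingleton (S.X₃ ⟶ Y) ↔ ∀ f : S.X₂ ⟶ Y, S.f ≫ f = 0 → f = 0 := by
  refine ⟨fun h f hf ↦ ?_, fun h ↦ subsingleton_of_forall_eq 0 fun f ↦
    Limits.zero_of_epi_comp S.g (h _ (by rw [S.zero_assoc, Limits.zero_comp]))⟩
  rw [← hS.g_desc f hf, Subsingleton.elim (hS.desc f hf) 0, Limits.comp_zero]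

lemma subsingleton_hom_iff_of_projectiveResolution (P : ProjectiveResolution X) :
    Subsingleton (X ⟶ Y) ↔ ∀ f : P.complex.X 0 ⟶ Y, P.complex.d 1 0 ≫ f = 0 → f = 0 :=
  have : Epi (P.π.f 0) := inferInstance
  subsingleton_hom_X₃_iff P.exact₀

lemma subsingleton_ext_succ_iff_of_projectiveResolution [HasExt.{w} C]
    (P : ProjectiveResolution X) (n : ℕ) :
    Subsingleton (Abelian.Ext X Y (n + 1)) ↔
      ∀ f : P.complex.X (n + 1) ⟶ Y, P.complex.d (n + 2) (n + 1) ≫ f = 0 →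
        ∃ g : P.complex.X n ⟶ Y, P.complex.d (n + 1) n ≫ g = f := by
  constructor
  · intro h f hf
    exact (P.extMk_eq_zero_iff f (n + 2) rfl hf n rfl).mp (Subsingleton.elim _ _)
  · refine fun h ↦ subsingleton_of_forall_eq 0 fun α ↦ ?_
    obtain ⟨f, hf, rfl⟩ := P.extMk_surjective α (n + 2) rfl
    exact (P.extMk_eq_zero_iff f (n + 2) rfl hf n rfl).mpr (h f hf)

variable {R : Type*} [Ring R] [Linear R C]

lemma exactAt_linearYonedaObj_zero_iff (K : ChainComplex C ℕ) :
    (K.linearYonedaObj R Y).ExactAt 0 ↔ ∀ f : K.X 0 ⟶ Y, K.d 1 0 ≫ f = 0 → f = 0 := by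
  have hd : (K.linearYonedaObj R Y).d 0 0 = 0 := (K.linearYonedaObj R Y).shape 0 0 (by simp)
  rw [HomologicalComplex.exactAt_iff' _ 0 0 1 (by simp) (by simp),
    ShortComplex.moduleCat_exact_iff]
  refine forall₂_congr fun f hf ↦ ⟨?_, fun h ↦ ⟨0, ?_⟩⟩
  · rintro ⟨g, rfl⟩
    exact congr($(hd).hom g)
  · exact (map_zero _).trans h.symm

lemma exactAt_linearYonedaObj_succ_iff (K : ChainComplex C ℕ) (n : ℕ) :
    (K.linearYonedaObj R Y).ExactAt (n + 1) ↔
      ∀ f : K.X (n + 1) ⟶ Y, K.d (n + 2) (n + 1) ≫ f = 0 →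
        ∃ g : K.X n ⟶ Y, K.d (n + 1) n ≫ g = f := by
  rw [HomologicalComplex.exactAt_iff' _ n (n + 1) (n + 2) (by simp) (by simp),
    ShortComplex.moduleCat_exact_iff]
  rfl

lemma subsingleton_ext_iff_exactAt_linearYonedaObj [HasExt.{w} C]
    (P : ProjectiveResolution X) (n : ℕ) :
    Subsingleton (Abelian.Ext X Y n) ↔ (P.complex.linearYonedaObj R Y).ExactAt n := by
  cases n with
  | zero =>
    rw [Ext.addEquiv₀.subsingleton_congr, subsingleton_hom_iff_of_projectiveResolution P,
      exactAt_linearYonedaObj_zero_iff]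
  | succ n =>
    rw [subsingleton_ext_succ_iff_of_projectiveResolution P, exactAt_linearYonedaObj_succ_iff]

-- `Ext R C n` is a derived functor of `Hom(-, Y)`, while `Abelian.Ext` comes with the long exact
-- sequence in the second variable.
lemma subsingleton_derived_ext_iff [EnoughProjectives C] [HasExt.{w} C] (X Y : C) (n : ℕ) :
    Subsingleton (((Ext R C n).obj (Opposite.op X)).obj Y) ↔ Subsingleton (Abelian.Ext X Y n) := by
  let P := projectiveResolution X
  rw [subsingleton_ext_iff_exactAt_linearYonedaObj (R := R) P,
    HomologicalComplex.exactAt_iff_isZero_homology, ← (P.isoExt (R := R) n Y).isZero_iff,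
    ModuleCat.isZero_iff_subsingleton]

end ExtComparison

section ExtLES

variable {C : Type u} [Category.{v} C] [Abelian C] [HasExt.{w} C]
  {S : ShortComplex C} (hS : S.ShortExact) (X : C) (n : ℕ)
include hS

lemma subsingleton_ext_X₃ (h₂ : Subsingleton (Abelian.Ext X S.X₂ n))
    (h₁ : Subsingleton (Abelian.Ext X S.X₁ (n + 1))) : Subsingleton (Abelian.Ext X S.X₃ n) := by
  refine subsingleton_of_forall_eq 0 fun γ ↦ ?_
  obtain ⟨β, rfl⟩ := Ext.covariant_sequence_exact₃ X hS γ rfl (Subsingleton.elim _ _)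
  rw [Subsingleton.elim β 0, Ext.zero_comp]

lemma subsingleton_ext_X₁_succ (h₃ : Subsingleton (Abelian.Ext X S.X₃ n))
    (hf : ∀ α : Abelian.Ext X S.X₁ (n + 1), α.comp (Ext.mk₀ S.f) (add_zero (n + 1)) = 0) :
    Subsingleton (Abelian.Ext X S.X₁ (n + 1)) := by
  refine subsingleton_of_forall_eq 0 fun α ↦ ?_
  obtain ⟨γ, rfl⟩ := Ext.covariant_sequence_exact₁ X hS α (hf α) rfl
  rw [Subsingleton.elim γ 0, Ext.zero_comp]

end ExtLES

section Grade

variable (R : Type u) [CommRing R] [Small.{v} R]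
  (M N : Type v) [AddCommGroup M] [Module R M] [AddCommGroup N] [Module R N]

/-- The grade of the pair `(M, N)`, that is, the least `i` with `Ext^i(M, N) ≠ 0`. It takes values
in `ℕ∞` and is `⊤` if all these groups vanish. -/
noncomputable def extGrade : ℕ∞ :=
  ⨅ (i : ℕ) (_ : Nontrivial (Abelian.Ext (ModuleCat.of R M) (ModuleCat.of R N) i)), (i : ℕ∞)

variable {R M N}

lemma natCast_le_extGrade_iff {n : ℕ} :
    n ≤ extGrade R M N ↔
      ∀ i < n, Subsingleton (Abelian.Ext (ModuleCat.of R M) (ModuleCat.of R N) i) := by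
  simp only [extGrade, le_iInf_iff, Nat.cast_le, ← not_nontrivial_iff_subsingleton]
  exact forall_congr' fun i ↦ by rw [← not_lt, imp_not_comm]

lemma one_le_extGrade_iff : 1 ≤ extGrade R M N ↔ Subsingleton (M →ₗ[R] N) := by
  rw [← Nat.cast_one, natCast_le_extGrade_iff]
  simp only [Nat.lt_one_iff, forall_eq]
  exact (Ext.addEquiv₀.trans ModuleCat.homAddEquiv).subsingleton_congr

lemma one_le_extGrade_iff_exists_isSMulRegular [IsNoetherianRing R] [Module.Finite R M]
    [Module.Finite R N] :
    1 ≤ extGrade R M N ↔ ∃ x ∈ Module.annihilator R M, IsSMulRegular N x :=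
  one_le_extGrade_iff.trans IsSMulRegular.subsingleton_linearMap_iff

lemma extGrade_congr_right {N' : Type v} [AddCommGroup N'] [Module R N'] (e : N ≃ₗ[R] N') :
    extGrade R M N = extGrade R M N' := by
  have (i : ℕ) : Nontrivial (Abelian.Ext (ModuleCat.of R M) (ModuleCat.of R N) i) ↔
      Nontrivial (Abelian.Ext (ModuleCat.of R M) (ModuleCat.of R N') i) :=
    (((extFunctorObj (ModuleCat.of R M) i).mapIso
      e.toModuleIso).addCommGroupIsoToAddEquiv).toEquiv.nontrivial_congr
  simp only [extGrade, this]

lemma extGrade_add_one_of_exact {L : Type v} [AddCommGroup L] [Module R L] {x : R}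
    (hxM : x ∈ Module.annihilator R M) (hxN : IsSMulRegular N x) {g : N →ₗ[R] L}
    (hg : Function.Exact (LinearMap.lsmul R N x) g) (hg' : Function.Surjective g) :
    extGrade R M L + 1 = extGrade R M N := by
  have hS : (ModuleCat.shortComplexOfCompEqZero (LinearMap.lsmul R N x) g
      hg.linearMap_comp_eq_zero).ShortExact := ModuleCat.shortComplex_shortExact _ hg hxN hg'
  have hzero (i : ℕ) (α : Abelian.Ext (ModuleCat.of R M) (ModuleCat.of R N) i) :
      α.comp (Ext.mk₀ (x • 𝟙 (ModuleCat.of R N))) (add_zero i) = 0 :=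
    congr($(Ext.postcomp_smul_id_eq_zero_of_mem_annihilator (M := ModuleCat.of R N)
      (N := ModuleCat.of R M) hxM i) α)
  refine ENat.eq_of_forall_natCast_le_iff fun n ↦ ?_
  cases n with
  | zero => simp
  | succ n =>
    rw [Nat.cast_succ, ENat.add_le_add_iff_right ENat.one_ne_top, ← Nat.cast_succ,
      natCast_le_extGrade_iff, natCast_le_extGrade_iff]
    constructor
    · rintro h (_ | i) hi
      · have := hxN.linearMap_subsingleton_of_mem_annihilator hxM
        exact (Ext.addEquiv₀.trans ModuleCat.homAddEquiv).subsingleton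
      · exact subsingleton_ext_X₁_succ hS _ i (h i (by omega)) (hzero (i + 1))
    · exact fun h i hi ↦ subsingleton_ext_X₃ hS _ i (h i (by omega)) (h (i + 1) (by omega))

lemma extGrade_quotSMulTop_add_one {x : R}
    (hxM : x ∈ Module.annihilator R M) (hxN : IsSMulRegular N x) :
    extGrade R M (QuotSMulTop x N) + 1 = extGrade R M N :=
  extGrade_add_one_of_exact hxM hxN (LinearMap.exact_lsmul_mkQ_smul_top N x)
    (Submodule.mkQ_surjective _)

end Grade

section Depth

/-- The depth of a module `N` over a local ring, defined as its grade against the residue field. It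
is `⊤` if all `Ext` groups from the residue field to `N` vanish, in particular for `N = 0`. -/
noncomputable def moduleDepth (A : Type u) [CommRing A] [IsLocalRing A]
    (N : Type u) [AddCommGroup N] [Module A N] : ℕ∞ :=
  extGrade A (ResidueField A) N

variable {A : Type u} [CommRing A] [IsLocalRing A] {N : Type u} [AddCommGroup N] [Module A N]

lemma annihilator_residueField : Module.annihilator A (ResidueField A) = maximalIdeal A :=
  Ideal.annihilator_quotient

lemma moduleDepth_eq_zero_of_isAssociatedPrime_maximalIdeal [IsNoetherianRing A]
    (h : IsAssociatedPrime (maximalIdeal A) N) : moduleDepth A N = 0 := by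
  obtain ⟨-, f, hf⟩ := (isAssociatedPrime_iff_exists_injective_linearMap _ _).mp h
  by_contra h0
  have : Subsingleton (ResidueField A →ₗ[A] N) :=
    one_le_extGrade_iff.mp (Order.one_le_iff_ne_zero.mpr h0)
  have hf0 : f = 0 := this.elim f 0
  exact one_ne_zero (α := ResidueField A) (hf (by rw [hf0]; rfl))

lemma natCast_le_supportDim_of_le_moduleDepth [IsNoetherianRing A] [Module.Finite A N]
    [Nontrivial N] {n : ℕ} (hn : n ≤ moduleDepth A N) :
    (n : WithBot ℕ∞) ≤ Module.supportDim A N := by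
  induction n generalizing N with
  | zero =>
    have : Nonempty (Module.support A N) := Module.nonempty_support_of_nontrivial.to_subtype
    exact Order.krullDim_nonneg
  | succ n ih =>
    obtain ⟨x, hxA, hxN⟩ := one_le_extGrade_iff_exists_isSMulRegular.mp
      ((Nat.one_le_cast.mpr n.succ_pos).trans hn)
    have hdim := Module.supportDim_quotSMulTop_succ_eq_supportDim hxN
      (annihilator_residueField.le hxA)
    have : Nontrivial (QuotSMulTop x N) := by
      rw [← Module.supportDim_ne_bot_iff_nontrivial A]
      exact fun h ↦ Module.supportDim_ne_bot_of_nontrivial A N (by rw [← hdim, h, WithBot.bot_add])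
    rw [moduleDepth, ← extGrade_quotSMulTop_add_one hxA hxN, Nat.cast_succ,
      ENat.add_le_add_iff_right ENat.one_ne_top] at hn
    rw [← hdim, Nat.cast_succ]
    gcongr
    exact ih hn

lemma moduleDepth_le_supportDim [IsNoetherianRing A] [Module.Finite A N] [Nontrivial N] :
    moduleDepth A N ≤ Module.supportDim A N := by
  lift Module.supportDim A N to ℕ∞ using Module.supportDim_ne_bot_of_nontrivial A N with d hd
  refine WithBot.coe_le_coe.mpr (ENat.forall_natCast_le_iff_le.mp fun n hn ↦ ?_)
  have h := natCast_le_supportDim_of_le_moduleDepth hn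
  rw [← hd] at h
  exact WithBot.coe_le_coe.mp h

lemma moduleDepth_self_ne_top [IsNoetherianRing A] : moduleDepth A A ≠ ⊤ := by
  intro h
  have hdim := moduleDepth_le_supportDim (A := A) (N := A)
  rw [h, Module.supportDim_self_eq_ringKrullDim] at hdim
  exact ringKrullDim_ne_top (top_le_iff.mp hdim)

end Depth

section Localization

open Pointwise

variable {R : Type u} [CommRing R] {N : Type u} [AddCommGroup N] [Module R N]

lemma exact_lsmul_localizedModule_map_mkQ (S : Submonoid R) (x : R) :
    Function.Exact
      (LinearMap.lsmul (Localization S) (LocalizedModule S N) (algebraMap R (Localization S) x))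
      (LocalizedModule.map S (x • (⊤ : Submodule R N)).mkQ) := by
  have h := LocalizedModule.map_exact S _ _ (LinearMap.exact_lsmul_mkQ_smul_top N x)
  convert h using 1
  · ext y
    induction y with
    | h n s =>
      rw [LinearMap.lsmul_apply, algebraMap_smul, IsLocalizedModule.map_LocalizedModules,
        LinearMap.lsmul_apply, LocalizedModule.smul'_mk]
  · rfl

lemma moduleDepth_localization_quotSMulTop_add_one (p : Ideal R) [p.IsPrime] {x : R} (hxp : x ∈ p)
    (hxN : IsSMulRegular N x) :
    moduleDepth (Localization.AtPrime p) (LocalizedModule.AtPrime p (QuotSMulTop x N)) + 1 =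
      moduleDepth (Localization.AtPrime p) (LocalizedModule.AtPrime p N) := by
  refine extGrade_add_one_of_exact ?_
    (hxN.of_isLocalizedModule (Localization.AtPrime p) p.primeCompl
      (LocalizedModule.mkLinearMap p.primeCompl N))
    (exact_lsmul_localizedModule_map_mkQ p.primeCompl x)
    (LocalizedModule.map_surjective _ _ (Submodule.mkQ_surjective _))
  rw [annihilator_residueField]
  exact (IsLocalization.AtPrime.to_map_mem_maximal_iff _ p x).mpr hxp

lemma moduleDepth_localizedModule_self (p : Ideal R) [p.IsPrime] :
    moduleDepth (Localization.AtPrime p) (LocalizedModule.AtPrime p R) =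
      moduleDepth (Localization.AtPrime p) (Localization.AtPrime p) :=
  extGrade_congr_right <| (IsLocalizedModule.linearEquiv p.primeCompl
    (LocalizedModule.mkLinearMap p.primeCompl R)
    (Algebra.linearMap R (Localization.AtPrime p))).extendScalarsOfIsLocalization p.primeCompl
      (Localization.AtPrime p)

end Localization

section GradeDepth

variable {R : Type u} [CommRing R] [IsNoetherianRing R] {M N : Type u}
  [AddCommGroup M] [Module R M] [Module.Finite R M] [AddCommGroup N] [Module R N]

lemma subsingleton_linearMap_of_one_le_moduleDepth
    (h : ∀ p ∈ Module.support R M, 1 ≤ moduleDepth (Localization.AtPrime p.asIdeal)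
      (LocalizedModule.AtPrime p.asIdeal N)) : Subsingleton (M →ₗ[R] N) := by
  by_contra! hMN
  obtain ⟨f, hf⟩ := exists_ne (0 : M →ₗ[R] N)
  obtain ⟨m, hm⟩ := DFunLike.ne_iff.mp hf
  obtain ⟨p, hp, hle⟩ := exists_le_isAssociatedPrime_of_isNoetherianRing R (f m) hm
  have := hp.isPrime
  have hpM : ⟨p, this⟩ ∈ Module.support R M := by
    refine Module.mem_support_iff_of_finite.mpr (le_trans (fun r hr ↦ ?_) hle)
    rw [Submodule.mem_colon_singleton, Submodule.mem_bot, ← map_smul,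
      Module.mem_annihilator.mp hr, map_zero]
  exact Order.one_le_iff_ne_zero.mp (h _ hpM)
    (moduleDepth_eq_zero_of_isAssociatedPrime_maximalIdeal
      (Module.associatedPrimes.mem_associatedPrimes_atPrime_of_mem_associatedPrimes hp))

lemma natCast_le_extGrade_iff_forall_le_moduleDepth [Module.Finite R N] (n : ℕ) :
    n ≤ extGrade R M N ↔ ∀ p ∈ Module.support R M,
      n ≤ moduleDepth (Localization.AtPrime p.asIdeal) (LocalizedModule.AtPrime p.asIdeal N) := by
  induction n generalizing N with
  | zero => simp
  | succ n ih =>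
    have hone : (1 : ℕ∞) ≤ (n + 1 : ℕ) := Nat.one_le_cast.mpr n.succ_pos
    by_cases hgrade : 1 ≤ extGrade R M N
    swap
    · refine iff_of_false (fun h ↦ hgrade (hone.trans h)) fun h ↦ hgrade ?_
      exact one_le_extGrade_iff.mpr
        (subsingleton_linearMap_of_one_le_moduleDepth fun p hp ↦ hone.trans (h p hp))
    obtain ⟨x, hxM, hxN⟩ := one_le_extGrade_iff_exists_isSMulRegular.mp hgrade
    rw [← extGrade_quotSMulTop_add_one hxM hxN, Nat.cast_succ,
      ENat.add_le_add_iff_right ENat.one_ne_top, ih]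
    refine forall₂_congr fun p hp ↦ ?_
    rw [← moduleDepth_localization_quotSMulTop_add_one p.asIdeal
      (Module.mem_support_iff_of_finite.mp hp hxM) hxN,
      ENat.add_le_add_iff_right ENat.one_ne_top]

theorem grade_eq_min_depth_support_general [Module.Finite R N] :
    extGrade R M N = ⨅ p ∈ Module.support R M,
      moduleDepth (Localization.AtPrime p.asIdeal) (LocalizedModule.AtPrime p.asIdeal N) :=
  ENat.eq_of_forall_natCast_le_iff fun n ↦ by
    simp only [le_iInf_iff, natCast_le_extGrade_iff_forall_le_moduleDepth]

end GradeDepth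

section NaturalNumberInfimum

lemma nat_sInf_eq_toNat_iInf (s : Set ℕ) : sInf s = (⨅ i ∈ s, (i : ℕ∞)).toNat := by
  rcases s.eq_empty_or_nonempty with rfl | hs
  · simp
  · rw [← ENat.natCast_sInf hs, ENat.toNat_natCast]

variable (R M N : Type) [CommRing R] [AddCommGroup M] [Module R M] [AddCommGroup N] [Module R N]

lemma nontrivial_extGroup_iff (i : ℕ) :
    Nontrivial (extGroup R i M N) ↔
      Nontrivial (Abelian.Ext (ModuleCat.of R M) (ModuleCat.of R N) i) := by
  simp only [← not_subsingleton_iff_nontrivial]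
  exact (subsingleton_derived_ext_iff _ _ i).not

lemma sInf_nontrivial_extGroup :
    sInf {i | Nontrivial (extGroup R i M N)} = (extGrade R M N).toNat := by
  simp only [nat_sInf_eq_toNat_iInf, Set.mem_ofPred_eq, nontrivial_extGroup_iff, extGrade]

lemma natCast_depthOf (A : Type) [CommRing A] [IsLocalRing A] [IsNoetherianRing A] :
    (depthOf A : ℕ∞) = moduleDepth A A := by
  rw [depthOf, sInf_nontrivial_extGroup, ← moduleDepth, ENat.natCast_toNat moduleDepth_self_ne_top]

lemma sInf_depthOf_image_support [IsNoetherianRing R] :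
    sInf ((fun p : PrimeSpectrum R ↦ depthOf (Localization.AtPrime p.asIdeal)) ''
        Module.support R M) =
      (⨅ p ∈ Module.support R M, moduleDepth (Localization.AtPrime p.asIdeal)
        (LocalizedModule.AtPrime p.asIdeal R)).toNat := by
  simp only [nat_sInf_eq_toNat_iInf, iInf_image, natCast_depthOf,
    moduleDepth_localizedModule_self]

end NaturalNumberInfimum

/-- For a commutative Noetherian ring `R` and a nonzero finite `R`-module `M`,
`grade M = min {i | Ext^i_R(M,R) ≠ 0}` equals `min {depth R_𝔭 | 𝔭 ∈ Supp M}`. -/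
theorem grade_eq_min_depth_support
    (R : Type) [CommRing R] [IsNoetherianRing R]
    (M : Type) [AddCommGroup M] [Module R M] [Module.Finite R M] [Nontrivial M] :
    sInf {i | Nontrivial (extGroup R i M R)} =
      sInf {d | ∃ (𝔭 : Ideal R) (h : 𝔭.IsPrime),
        haveI := h
        Nontrivial (LocalizedModule 𝔭.primeCompl M) ∧
          d = depthOf (Localization.AtPrime 𝔭)} := by
  rw [sInf_nontrivial_extGroup, grade_eq_min_depth_support_general, ← sInf_depthOf_image_support]
  congr 1
  ext d
  exact ⟨fun ⟨p, hpM, hd⟩ ↦ ⟨p.asIdeal, p.isPrime, hpM, hd.symm⟩,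
    fun ⟨𝔭, h𝔭, hM, hd⟩ ↦ ⟨⟨𝔭, h𝔭⟩, hM, hd.symm⟩⟩
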